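/- For every integer n > 3 there exists a Steiner triple system which has both a minimal spreading set of size 3 and a minimal spreading set of size n. -/

import Mathlib

/-- A Steiner triple system on `V`: a family `T` of 3-element `Finset`s such that
every pair of distinct points lies in exactly one member of `T`. -/
def IsSTS {V : Type*} (T : Set (Finset V)) : Prop :=
  (∀ t ∈ T, t.card = 3) ∧
    ∀ x y : V, x ≠ y → ∃! t : Finset V, t ∈ T ∧ x ∈ t ∧ y ∈ t

/-- `W` is closed w.r.t. the triple system `T`: whenever a triple of `T` contains two
points of `W`, all (in particular the third) of its points lie in `W`. -/
def StsClosed {V : Type*} (T : Set (Finset V)) (W : Set V) : Prop :=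
  ∀ t ∈ T, ∀ x ∈ t, ∀ y ∈ t, x ≠ y → x ∈ W → y ∈ W → ∀ z ∈ t, z ∈ W

/-- The closure of `S` w.r.t. `T`: the smallest closed set containing `S`. -/
def stsCl {V : Type*} (T : Set (Finset V)) (S : Set V) : Set V :=
  ⋂₀ {W : Set V | S ⊆ W ∧ StsClosed T W}

/-- `S` is a spreading set: its closure is the whole point set. -/
def IsSpreading {V : Type*} (T : Set (Finset V)) (S : Set V) : Prop :=
  stsCl T S = Set.univ

/-- `S` is a minimal spreading set: it is spreading but no proper subset is. -/
def IsMinSpreading {V : Type*} (T : Set (Finset V)) (S : Set V) : Prop :=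
  IsSpreading T S ∧ ∀ S' : Set V, S' ⊂ S → ¬ IsSpreading T S'

/-- Laws of a Steiner quasigroup. -/
structure SqLaws {V : Type*} (μ : V → V → V) : Prop where
  idem : ∀ x, μ x x = x
  comm : ∀ x y, μ x y = μ y x
  inv : ∀ x y, μ x (μ x y) = y

/-- closed under the operation -/
def OpClosed {V : Type*} (μ : V → V → V) (W : Set V) : Prop :=
  ∀ x ∈ W, ∀ y ∈ W, μ x y ∈ W

/-- spreading for the operation -/
def OpSpr {V : Type*} (μ : V → V → V) (S : Set V) : Prop :=
  ∀ W : Set V, S ⊆ W → OpClosed μ W → ∀ v, v ∈ W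

/-- triples of the operation -/
def opTriples {V : Type*} [DecidableEq V] (μ : V → V → V) : Set (Finset V) :=
  {t | ∃ x y, x ≠ y ∧ t = {x, y, μ x y}}

theorem SqLaws.ne_left {V : Type*} {μ : V → V → V} (h : SqLaws μ) {x y : V} (hxy : x ≠ y) :
    x ≠ μ x y := by
  intro e
  have := h.inv x y
  rw [← e, h.idem] at this
  exact hxy this

theorem SqLaws.ne_right {V : Type*} {μ : V → V → V} (h : SqLaws μ) {x y : V} (hxy : x ≠ y) :
    y ≠ μ x y := by
  rw [h.comm]; exact h.ne_left hxy.symm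

theorem SqLaws.mem_triple {V : Type*} [DecidableEq V] {μ : V → V → V} (h : SqLaws μ)
    {t : Finset V} (ht : t ∈ opTriples μ) {x y : V} (hx : x ∈ t) (hy : y ∈ t) (hxy : x ≠ y) :
    t = {x, y, μ x y} := by
  obtain ⟨a, b, hab, rfl⟩ := ht
  have h1 := h.inv a b
  have h2 := h.inv b a
  have h3 := h.comm a b
  have h4 := h.comm a (μ a b)
  have h5 := h.comm b (μ a b)
  rw [← h3] at h2
  simp only [Finset.mem_insert, Finset.mem_singleton] at hx hy
  rcases hx with rfl | rfl | rfl <;> rcases hy with rfl | rfl | rfl <;>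
    first
    | exact absurd rfl hxy
    | rfl
    | (ext z; simp only [Finset.mem_insert, Finset.mem_singleton]; grind)

theorem SqLaws.isSTS {V : Type*} [DecidableEq V] {μ : V → V → V} (h : SqLaws μ) :
    IsSTS (opTriples μ) := by
  constructor
  · rintro t ⟨x, y, hxy, rfl⟩
    exact Finset.card_eq_three.2 ⟨x, y, μ x y, hxy, h.ne_left hxy, h.ne_right hxy, rfl⟩
  · intro x y hxy
    refine ⟨{x, y, μ x y}, ⟨⟨x, y, hxy, rfl⟩, by simp, by simp⟩, ?_⟩
    rintro t ⟨ht, hx, hy⟩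
    exact h.mem_triple ht hx hy hxy

theorem SqLaws.closed_iff {V : Type*} [DecidableEq V] {μ : V → V → V} (h : SqLaws μ)
    (W : Set V) : StsClosed (opTriples μ) W ↔ OpClosed μ W := by
  constructor
  · intro hW x hx y hy
    by_cases hxy : x = y
    · subst hxy; rwa [h.idem]
    · exact hW {x, y, μ x y} ⟨x, y, hxy, rfl⟩ x (by simp) y (by simp) hxy hx hy _ (by simp)
  · intro hW t ht x hx y hy hxy hxW hyW z hz
    rw [h.mem_triple ht hx hy hxy] at hz
    simp only [Finset.mem_insert, Finset.mem_singleton] at hz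
    rcases hz with rfl | rfl | rfl
    · exact hxW
    · exact hyW
    · exact hW _ hxW _ hyW

theorem SqLaws.spreading_iff {V : Type*} [DecidableEq V] {μ : V → V → V} (h : SqLaws μ)
    (S : Set V) : IsSpreading (opTriples μ) S ↔ OpSpr μ S := by
  unfold IsSpreading stsCl OpSpr
  rw [Set.eq_univ_iff_forall]
  simp only [Set.mem_sInter, Set.mem_ofPred_eq, h.closed_iff]
  constructor
  · intro H W h1 h2 v; exact H v W ⟨h1, h2⟩
  · intro H v W h1; exact H W h1.1 h1.2 v

/-- Reduction to an arbitrary finite Steiner quasigroup. -/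
theorem reduce {V : Type*} [Fintype V] {μ : V → V → V} (h : SqLaws μ) (n : ℕ)
    (A B : Finset V) (hA : A.card = 3) (hB : B.card = n)
    (sA : OpSpr μ A) (sB : OpSpr μ B)
    (mA : ∀ u ∈ A, ¬ OpSpr μ (↑A \ {u})) (mB : ∀ u ∈ B, ¬ OpSpr μ (↑B \ {u})) :
    ∃ (m : ℕ) (T : Set (Finset (Fin m))),
      IsSTS T ∧
      (∃ U : Finset (Fin m), IsMinSpreading T ↑U ∧ U.card = 3) ∧
      (∃ U : Finset (Fin m), IsMinSpreading T ↑U ∧ U.card = n) := by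
  obtain ⟨e⟩ : Nonempty (V ≃ Fin (Fintype.card V)) := ⟨Fintype.equivFin V⟩
  let ν : Fin (Fintype.card V) → Fin (Fintype.card V) → Fin (Fintype.card V) :=
    fun x y => e (μ (e.symm x) (e.symm y))
  have hν : SqLaws ν := ⟨fun x => by simp [ν, h.idem], fun x y => by simp [ν, h.comm (e.symm x)],
    fun x y => by simp [ν, h.inv]⟩
  have tr : ∀ S : Set (Fin (Fintype.card V)), OpSpr ν S ↔ OpSpr μ (e ⁻¹' S) := by
    intro S
    constructor
    · intro H W h1 h2 v
      have := H (e.symm ⁻¹' W) (fun s hs => h1 (by simpa using hs))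
        (fun x hx y hy => by simpa [ν] using h2 _ hx _ hy) (e v)
      simpa using this
    · intro H W h1 h2 v
      have := H (e ⁻¹' W) (fun s hs => h1 hs)
        (fun x hx y hy => by simpa [ν] using h2 _ hx _ hy) (e.symm v)
      simpa using this
  have key : ∀ C : Finset V, OpSpr μ C → (∀ u ∈ C, ¬ OpSpr μ (↑C \ {u})) →
      IsMinSpreading (opTriples ν) ↑(C.map e.toEmbedding) := by
    intro C sC mC
    refine ⟨?_, ?_⟩
    · rw [hν.spreading_iff, tr]
      convert sC
      ext x; simp
    · intro S' hS'
      rw [hν.spreading_iff, tr]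
      intro hs
      obtain ⟨u, hu, hu'⟩ := Set.exists_of_ssubset hS'
      have hu2 : e.symm u ∈ C := by
        simp only [Finset.coe_map, Set.mem_image] at hu
        obtain ⟨w, hw, rfl⟩ := hu
        simpa using hw
      refine mC _ hu2 ?_
      intro W h1 h2
      refine hs W (fun x hx => h1 ⟨?_, ?_⟩) h2
      · have := hS'.1 hx
        simpa using this
      · rintro rfl
        exact hu' (by simpa using hx)
  exact ⟨_, opTriples ν, hν.isSTS, ⟨_, key A sA mA, by simpa using hA⟩,
    ⟨_, key B sB mB, by simpa using hB⟩⟩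

/-- two points never spread in a big Steiner quasigroup -/
theorem SqLaws.two_not_spr {V : Type*} [Fintype V] [DecidableEq V] {μ : V → V → V} (h : SqLaws μ)
    (hc : 3 < Fintype.card V) (A : Finset V) (hA : A.card = 3) :
    ∀ u ∈ A, ¬ OpSpr μ (↑A \ {u}) := by
  intro u hu hs
  have h2 : (A.erase u).card = 2 := by rw [Finset.card_erase_of_mem hu, hA]
  obtain ⟨x, y, hxy, he⟩ := Finset.card_eq_two.1 h2
  have h1 := h.inv x y
  have h2 := h.inv y x
  have h3 := h.comm x y
  have h4 := h.comm x (μ x y)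
  have h5 := h.comm y (μ x y)
  have h6 := h.idem
  have := hs (({x, y, μ x y} : Finset V) : Set V) ?_ ?_
  · have hu : ({x, y, μ x y} : Finset V) = Finset.univ := by
      ext v; simpa using this v
    have := Finset.card_le_three (a := x) (b := y) (c := μ x y)
    rw [hu, Finset.card_univ] at this
    omega
  · rw [← Finset.coe_erase, he]
    intro z; simp; tauto
  · intro a ha b hb
    simp only [Finset.coe_insert, Finset.coe_singleton, Set.mem_insert_iff,
      Set.mem_singleton_iff] at ha hb ⊢
    rcases ha with rfl | rfl | rfl <;> rcases hb with rfl | rfl | rfl <;> grind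

/-- Bose construction operation -/
def bose {R : Type*} [CommRing R] [DecidableEq R] (c : R) (v w : R × Fin 3) : R × Fin 3 :=
  if v.2 = w.2 then (if v.1 = w.1 then v else (c * (v.1 + w.1), v.2 + 1))
  else if w.2 = v.2 + 1 then
    (if v.1 = w.1 then (v.1, v.2 + 2) else (2 * w.1 - v.1, v.2))
  else (if v.1 = w.1 then (v.1, w.2 + 2) else (2 * v.1 - w.1, w.2))

theorem bose_laws {R : Type*} [CommRing R] [DecidableEq R] (c : R) (hc : c * 2 = 1) :
    SqLaws (bose c) := by
  refine ⟨?_, ?_, ?_⟩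
  · intro x; simp [bose]
  · rintro ⟨x, i⟩ ⟨y, j⟩
    by_cases hxy : x = y
    · subst hxy
      fin_cases i <;> fin_cases j <;> simp [bose]
    · have hyx : ¬ y = x := fun h => hxy h.symm
      fin_cases i <;> fin_cases j <;> simp [bose, hxy, hyx, add_comm]
  · rintro ⟨x, i⟩ ⟨y, j⟩
    by_cases hxy : x = y
    · subst hxy
      fin_cases i <;> fin_cases j <;> simp [bose]
    · have hyx : ¬ y = x := fun h => hxy h.symm
      have h1 : ¬ x = c * (x + y) := by
        intro h; apply hxy; linear_combination 2 * h + (x + y) * hc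
      have h2 : ¬ x = 2 * y - x := by
        intro h; apply hxy; linear_combination c * h + (y - x) * hc
      have h3 : ¬ x = 2 * x - y := by
        intro h; apply hxy; linear_combination - h
      have h4 : 2 * (c * (x + y)) - x = y := by linear_combination (x + y) * hc
      have h5 : c * (2 * y) = y := by linear_combination y * hc
      fin_cases i <;> fin_cases j <;> simp [bose, hxy, h1, h2, h3, h4, h5]

theorem bose_core {R : Type*} [CommRing R] [DecidableEq R] (c : R) (hc : c * 2 = 1)
    (k : ℕ) (hk : c = k) (W : Set (R × Fin 3)) (hW : OpClosed (bose c) W)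
    (a b d : R) (hab : a ≠ b) (had : a ≠ d) (hbd : b ≠ d)
    (ha : (a, 0) ∈ W) (hb : (b, 0) ∈ W) (hd : (d, 0) ∈ W) :
    ∃ H : AddSubgroup R, ∀ x i, (x, i) ∈ W ↔ x - a ∈ H := by
  have mid : ∀ x y i, x ≠ y → (x, i) ∈ W → (y, i) ∈ W → (c * (x + y), i + 1) ∈ W := by
    intro x y i hxy hx hy
    simpa [bose, hxy] using hW _ hx _ hy
  have rfl' : ∀ x y i, (x, i) ∈ W → (y, i + 1) ∈ W → (2 * y - x, i) ∈ W := by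
    intro x y i hx hy
    by_cases hxy : x = y
    · subst hxy; convert hx using 2; ring
    · simpa [bose, hxy] using hW _ hx _ hy
  have third : ∀ x i, (x, i) ∈ W → (x, i + 1) ∈ W → (x, i + 2) ∈ W := by
    intro x i hx hy
    simpa [bose] using hW _ hx _ hy
  have par : ∀ x y z, y ≠ z → (x, 0) ∈ W → (y, 0) ∈ W → (z, 0) ∈ W → (y + z - x, 0) ∈ W := by
    intro x y z hyz hx hy hz
    have := rfl' x _ 0 hx (mid y z 0 hyz hy hz)
    convert this using 2
    linear_combination - (y + z) * hc
  have a1 : (a, 1) ∈ W := by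
    have h1 := par d a b hab hd ha hb
    have h2 := par b a d had hb ha hd
    have h3 : a + b - d ≠ a + d - b := by
      intro h; apply hbd; linear_combination c * h + (d - b) * hc
    have := mid _ _ 0 h3 h1 h2
    have e : c * (a + b - d + (a + d - b)) = a := by linear_combination a * hc
    rw [e] at this
    exact this
  have a2 : (a, 2) ∈ W := third a 0 ha a1
  have aa : ∀ i, (a, i) ∈ W := by
    intro i; fin_cases i
    · exact ha
    · exact a1
    · exact a2
  have half : ∀ x i, (a + x, i) ∈ W → (a + c * x, i + 1) ∈ W := by
    intro x i hx
    by_cases h0 : x = 0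
    · subst h0; simpa using aa (i + 1)
    · have := mid a (a + x) i (by simpa using h0) (aa i) hx
      convert this using 2
      linear_combination -a * hc
  have dbl : ∀ x i, (a + x, i + 1) ∈ W → (a + 2 * x, i) ∈ W := by
    intro x i hx
    convert rfl' a _ i (aa i) hx using 2
    ring
  have neg : ∀ x i, (a + x, i) ∈ W → (a + -x, i) ∈ W := by
    intro x i hx
    convert rfl' _ a i hx (aa _) using 2
    ring
  have sub : ∀ x y, (a + x, 0) ∈ W → (a + y, 0) ∈ W → (a + (x - y), 0) ∈ W := by
    intro x y hx hy
    convert rfl' _ _ 0 hy (half x 0 hx) using 2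
    linear_combination -x * hc
  let H : AddSubgroup R :=
    { carrier := {x | (a + x, 0) ∈ W}
      zero_mem' := by simpa using ha
      neg_mem' := fun {x} hx => neg x 0 hx
      add_mem' := fun {x y} hx hy => by
        have := sub x (-y) hx (neg y 0 hy)
        simpa using this }
  have hH : ∀ x, x ∈ H ↔ (a + x, 0) ∈ W := fun x => Iff.rfl
  have h2 : ∀ x, x ∈ H → 2 * x ∈ H := fun x hx => by
    rw [two_mul]; exact H.add_mem hx hx
  have hh : ∀ x, 2 * x ∈ H → x ∈ H := fun x hx => by
    have := H.nsmul_mem hx k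
    rw [nsmul_eq_mul, ← hk] at this
    convert this using 1
    linear_combination -x * hc
  have up : ∀ x i, (a + 2 * x, i) ∈ W → (a + x, i + 1) ∈ W := by
    intro x i hx
    convert half _ i hx using 2
    linear_combination -x * hc
  have L : ∀ x i, (a + x, i) ∈ W ↔ x ∈ H := by
    intro x i
    fin_cases i
    · exact (hH x).symm
    · exact ⟨fun h => hh x (dbl x 0 h), fun h => up x 0 (h2 x h)⟩
    · exact ⟨fun h => hh _ (hh _ (dbl _ 0 (dbl x 1 h))),
        fun h => up x 1 (up _ 0 (h2 _ (h2 x h)))⟩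
  refine ⟨H, fun x i => ?_⟩
  rw [← L (x - a) i]; simp

theorem exists_sts_minSpreading_three_and_n (n : ℕ) (hn : 3 < n) :
    ∃ (m : ℕ) (T : Set (Finset (Fin m))),
      IsSTS T ∧
      (∃ U : Finset (Fin m), IsMinSpreading T ↑U ∧ U.card = 3) ∧
      (∃ U : Finset (Fin m), IsMinSpreading T ↑U ∧ U.card = n) := by
  classical
  let p : ℕ → ℕ := Nat.fermatNumber
  have p3 : ∀ i, 3 ≤ p i := Nat.three_le_fermatNumber
  have podd : ∀ i, Odd (p i) := Nat.odd_fermatNumber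
  have pco : ∀ i j, i ≠ j → Nat.Coprime (p i) (p j) :=
    fun i j h => Nat.coprime_fermatNumber_fermatNumber h
  let I := Finset.range n
  obtain ⟨N, hN⟩ : ∃ N, N = ∏ i ∈ I, p i := ⟨_, rfl⟩
  let q : ℕ → ℕ := fun i => ∏ j ∈ I \ {i}, p j
  have pq : ∀ i ∈ I, p i * q i = N := fun i hi => by
    rw [hN, ← Finset.mul_prod_erase I p hi, Finset.erase_eq]
  have pdvd : ∀ i ∈ I, p i ∣ N := fun i hi => ⟨_, (pq i hi).symm⟩
  have pdq : ∀ i ∈ I, ∀ j, j ≠ i → p i ∣ q j := fun i hi j hj =>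
    Finset.dvd_prod_of_mem p (by simp [hi, hj.symm])
  have pndq : ∀ i, ¬ p i ∣ q i := fun i h => by
    have hco : Nat.Coprime (p i) (q i) := Nat.Coprime.prod_right fun j hj => by
      simp only [Finset.mem_sdiff, Finset.mem_singleton] at hj
      exact pco i j (Ne.symm hj.2)
    have := Nat.Coprime.eq_one_of_dvd hco h
    have := p3 i
    omega
  have Nodd : Odd N := by
    rw [hN]
    exact Finset.prod_induction p Odd (fun _ _ => Odd.mul) odd_one (fun i _ => podd i)
  have N0 : 0 < N := Nodd.pos
  have N3 : 3 ≤ N := (p3 0).trans (Nat.le_of_dvd N0 (pdvd 0 (by simp [I]; omega)))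
  have : NeZero N := ⟨N0.ne'⟩
  have : Fact (1 < N) := ⟨by omega⟩
  obtain ⟨r, hr⟩ := Nodd
  obtain ⟨c, hc⟩ : ∃ c : ZMod N, c = ((r + 1 : ℕ) : ZMod N) := ⟨_, rfl⟩
  have hc2 : c * 2 = 1 := by
    have h : ((2 * r + 1 : ℕ) : ZMod N) = 0 := by rw [← hr]; simp
    rw [hc]; push_cast at h ⊢; linear_combination h
  have laws := bose_laws c hc2
  -- main generation lemma
  have gen : ∀ S : Finset (ZMod N × Fin 3), ∀ a b d : ZMod N, a ≠ b → a ≠ d → b ≠ d →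
      (a, 0) ∈ S → (b, 0) ∈ S → (d, 0) ∈ S →
      (∀ H : AddSubgroup (ZMod N), (∀ x, (x, 0) ∈ S → x - a ∈ H) → 1 ∈ H) →
      OpSpr (bose c) S := by
    intro S a b d hab had hbd ha hb hd hS W hSW hW v
    obtain ⟨H, hH⟩ := bose_core c hc2 (r + 1) hc W hW a b d hab had hbd
      (hSW ha) (hSW hb) (hSW hd)
    have h1 : (1 : ZMod N) ∈ H := hS H fun x hx => (hH x 0).1 (hSW hx)
    have hall : ∀ x, x ∈ H := fun x => by
      have := H.nsmul_mem h1 x.val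
      simpa using this
    exact (hH v.1 v.2).2 (hall _)
  let A : Finset (ZMod N × Fin 3) := {(0, 0), (1, 0), (2, 0)}
  have h20 : (0 : ZMod N) ≠ 2 := fun h => by
    rw [← h, mul_zero] at hc2; exact zero_ne_one hc2
  have h12 : (1 : ZMod N) ≠ 2 := fun h => by
    apply zero_ne_one (α := ZMod N); linear_combination h
  have hA : A.card = 3 := Finset.card_eq_three.2
    ⟨_, _, _, by simp, by simpa using h20, by simpa using h12, rfl⟩
  let f : ℕ → ZMod N × Fin 3 := fun i => ((q i : ZMod N), 0)
  let B : Finset (ZMod N × Fin 3) := I.image f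
  have cast0 : ∀ i, ∀ hi : i ∈ I, ∀ j ∈ I, (ZMod.castHom (pdvd i hi) (ZMod (p i)) (q j : ZMod N) = 0 ↔ j ≠ i) := by
    intro i hi j hj
    rw [map_natCast, ZMod.natCast_eq_zero_iff]
    constructor
    · rintro h rfl; exact pndq _ h
    · intro h; exact pdq i hi j h
  have qinj : ∀ i ∈ I, ∀ j ∈ I, (q i : ZMod N) = q j → i = j := by
    intro i hi j hj h
    by_contra hne
    have h1 := (cast0 i hi j hj).2 (Ne.symm hne)
    rw [← h] at h1
    exact (cast0 i hi i hi).1 h1 rfl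
  have hB : B.card = n := by
    rw [Finset.card_image_of_injOn, Finset.card_range]
    intro i hi j hj h
    exact qinj i hi j hj (Prod.ext_iff.1 h).1
  refine reduce laws n A B hA hB ?_ ?_ ?_ ?_
  · refine gen A 0 1 2 (by simp) h20 h12 (by simp [A]) (by simp [A]) (by simp [A]) ?_
    intro H hH
    simpa using hH 1 (by simp [A])
  · have m0 : 0 ∈ I := by simp [I]; omega
    have m1 : 1 ∈ I := by simp [I]; omega
    have m2 : 2 ∈ I := by simp [I]; omega
    refine gen B (q 0) (q 1) (q 2) ?_ ?_ ?_ (Finset.mem_image_of_mem f m0)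
      (Finset.mem_image_of_mem f m1) (Finset.mem_image_of_mem f m2) ?_
    · intro h; have := qinj _ m0 _ m1 h; omega
    · intro h; have := qinj _ m0 _ m2 h; omega
    · intro h; have := qinj _ m1 _ m2 h; omega
    intro H hH
    have d0 : ∀ i ∈ I, (q i : ZMod N) - q 0 ∈ H := fun i hi =>
      hH _ (Finset.mem_image_of_mem f hi)
    have dd : ∀ i ∈ I, ∀ j ∈ I, (q i : ZMod N) - q j ∈ H := fun i hi j hj => by
      simpa using H.sub_mem (d0 i hi) (d0 j hj)
    have pq0 : ∀ i ∈ I, (p i : ZMod N) * q i = 0 := fun i hi => by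
      rw [← Nat.cast_mul, pq i hi]; simp
    have qH : ∀ i ∈ I, (q i : ZMod N) ∈ H := by
      intro i hi
      obtain ⟨j, hj, hij⟩ : ∃ j ∈ I, i ≠ j := by
        by_cases h : i = 0
        · exact ⟨1, m1, by omega⟩
        · exact ⟨0, m0, h⟩
      have h1 : (p j : ZMod N) * q i ∈ H := by
        have := H.nsmul_mem (dd i hi j hj) (p j)
        rw [nsmul_eq_mul] at this
        convert this using 1
        linear_combination pq0 j hj
      obtain ⟨u, w, huw⟩ := Nat.isCoprime_iff_coprime.2 (pco i j hij)
      have h2 := H.zsmul_mem h1 w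
      rw [zsmul_eq_mul] at h2
      convert h2 using 1
      have huw' : (u : ZMod N) * p i + w * p j = 1 := by exact_mod_cast congrArg (Int.cast (R := ZMod N)) huw
      linear_combination (u : ZMod N) * pq0 i hi - (q i : ZMod N) * huw'
    obtain ⟨w, hw⟩ := (_root_.exists_sum_eq_one_iff_pairwise_coprime (t := I)
      (s := fun i => (p i : ℤ)) ⟨0, m0⟩).2 (by
        intro i j hij
        exact Nat.isCoprime_iff_coprime.2 (pco i j (fun h => hij (Subtype.ext h))))
    have : ∑ i ∈ I, w i • (q i : ZMod N) ∈ H :=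
      H.sum_mem fun i hi => H.zsmul_mem (qH i hi) _
    convert this using 1
    have hw' := congrArg (Int.cast (R := ZMod N)) hw
    rw [Int.cast_one] at hw'
    rw [← hw']
    push_cast
    refine Finset.sum_congr rfl fun i _ => ?_
    simp [q, zsmul_eq_mul]
  · refine laws.two_not_spr ?_ A hA
    simp [ZMod.card]; omega
  · intro u hu hs
    obtain ⟨i, hi, rfl⟩ := Finset.mem_image.1 hu
    let φ := ZMod.castHom (pdvd i hi) (ZMod (p i))
    have hbad := hs {v | φ v.1 = 0} ?_ ?_ (1, 0)
    · have : Fact (1 < p i) := ⟨by have := p3 i; omega⟩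
      have h : φ 1 = 0 := hbad
      rw [map_one] at h
      exact one_ne_zero h
    · rintro x ⟨hx, hxi⟩
      obtain ⟨j, hj, rfl⟩ := Finset.mem_image.1 (Finset.mem_coe.1 hx)
      refine (cast0 i hi j hj).2 ?_
      rintro rfl
      exact hxi rfl
    · intro x hx y hy
      simp only [Set.mem_ofPred_eq] at hx hy ⊢
      unfold bose
      split_ifs <;> simp [hx, hy]
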